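/- For every x ∈ X and every r with d̂(x)/3 ≤ r ≤ 1, one has B(x, 1/(4 d̂(x))) ⊂ B_a(x,r) ⊂ B̂(x,r) ⊂ X̂ \ B̄(a, 1/(4r) − 1), where B̄(a,ρ) = {y ∈ X : d(y,a) ≤ ρ} (empty when ρ < 0). -/

import Mathlib

open Metric Set MeasureTheory Filter
open scoped ENNReal NNReal

noncomputable section

variable {X : Type*}

/-- The quasimetric `d_a` on the sphericalization `X̂ = X ∪ {∞}`, with `none` playing
the role of the point `∞`. -/
noncomputable def sphDist [MetricSpace X] (a : X) : Option X → Option X → ℝ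
  | some x, some y => dist x y / ((1 + dist x a) * (1 + dist y a))
  | some x, none => 1 / (1 + dist x a)
  | none, some y => 1 / (1 + dist y a)
  | none, none => 0

/-- The sum `Σ_{j=1}^k d_a(x_{j-1}, x_j)` along a finite sequence (list) in `X̂`. -/
noncomputable def chainSum [MetricSpace X] (a : X) : List (Option X) → ℝ
  | [] => 0
  | [_] => 0
  | x :: y :: l => sphDist a x y + chainSum a (y :: l)

/-- The sphericalized distance `d̂(x,y) = inf Σ_{j=1}^k d_a(x_{j-1},x_j)`, the infimum
being taken over all finite sequences `x = x_0, x_1, …, x_k = y` in `X̂`. -/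
noncomputable def sphHatDist [MetricSpace X] (a : X) (x y : Option X) : ℝ :=
  sInf {s : ℝ | ∃ L : List (Option X),
    L.head? = some x ∧ L.getLast? = some y ∧ chainSum a L = s}

/-- `d̂(x) = d̂(x,∞) = 1/(1+|x|)` for `x ∈ X`. -/
noncomputable def sphD [MetricSpace X] (a x : X) : ℝ := 1 / (1 + dist x a)

/-!
Although `d_a` may violate the triangle inequality, it satisfies it for paths starting at `∞`:
`d_a(∞, q) ≤ d_a(∞, p) + d_a(p, q)`. Summing along chains replaces `d_a(p, q)` by `d̂(p, q)`, so a
point `y` with `d̂(x, y) < r` satisfies `1 / (1 + |y|) < d̂(x) + r ≤ 4r`, which bounds `|y|` from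
below. For the first inclusion, `d(x, y) < (1 + |x|) / 4` forces `1 + |y| ≥ (3/4)(1 + |x|)`, hence
`d_a(x, y) < (1/4) / (3/4) · d̂(x) = d̂(x) / 3`.
-/

section Sphericalization

variable [MetricSpace X] {a x y : X} {p q : Option X}

theorem sphD_pos (a x : X) : 0 < sphD a x := by
  unfold sphD
  positivity

theorem sphDist_nonneg (a : X) (p q : Option X) : 0 ≤ sphDist a p q := by
  cases p <;> cases q <;> simp only [sphDist] <;> positivity

theorem chainSum_nonneg (a : X) (L : List (Option X)) : 0 ≤ chainSum a L := by
  induction L using chainSum.induct with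
  | case1 | case2 => exact le_rfl
  | case3 p q L ih => exact add_nonneg (sphDist_nonneg a p q) ih

theorem chainSum_pair (a : X) (p q : Option X) : chainSum a [p, q] = sphDist a p q :=
  add_zero _

theorem sphHatDist_le_sphDist (a : X) (p q : Option X) : sphHatDist a p q ≤ sphDist a p q := by
  refine csInf_le ⟨0, ?_⟩ ⟨[p, q], rfl, rfl, chainSum_pair a p q⟩
  rintro _ ⟨L, -, -, rfl⟩
  exact chainSum_nonneg a L

theorem le_add_chainSum {f : Option X → ℝ} (hf : ∀ p q, f q ≤ f p + sphDist a p q)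
    {L : List (Option X)} (hp : L.head? = some p) (hq : L.getLast? = some q) :
    f q ≤ f p + chainSum a L := by
  induction L using chainSum.induct generalizing p with
  | case1 => cases hp
  | case2 u =>
    obtain rfl : u = p := Option.some.inj hp
    obtain rfl : u = q := Option.some.inj hq
    exact (add_zero _).ge
  | case3 u v L ih =>
    obtain rfl : u = p := Option.some.inj hp
    calc f q ≤ f v + chainSum a (v :: L) := ih rfl (by rwa [List.getLast?_cons_cons] at hq)
      _ ≤ f u + sphDist a u v + chainSum a (v :: L) := by gcongr; exact hf u v
      _ = f u + chainSum a (u :: v :: L) := add_assoc _ _ _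

theorem le_add_sphHatDist {f : Option X → ℝ} (hf : ∀ p q, f q ≤ f p + sphDist a p q)
    (p q : Option X) : f q ≤ f p + sphHatDist a p q := by
  rw [← sub_le_iff_le_add']
  refine le_csInf ⟨_, [p, q], rfl, rfl, rfl⟩ ?_
  rintro _ ⟨L, hp, hq, rfl⟩
  exact sub_le_iff_le_add'.mpr (le_add_chainSum hf hp hq)

theorem sphDist_none_triangle (a : X) (p q : Option X) :
    sphDist a none q ≤ sphDist a none p + sphDist a p q := by
  match p, q with
  | none, q => exact (zero_add _).ge
  | some x, none => exact add_nonneg (sphDist_nonneg a _ _) (sphDist_nonneg a _ _)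
  | some x, some y =>
    calc 1 / (1 + dist y a)
        = (1 + dist x a) / ((1 + dist x a) * (1 + dist y a)) := by field_simp
      _ ≤ (1 + dist y a + dist x y) / ((1 + dist x a) * (1 + dist y a)) := by
          gcongr ?_ / _
          linarith [dist_triangle x y a]
      _ = 1 / (1 + dist x a) + dist x y / ((1 + dist x a) * (1 + dist y a)) := by field_simp

theorem sphD_le_add_sphHatDist (a x y : X) :
    sphD a y ≤ sphD a x + sphHatDist a (some x) (some y) :=
  le_add_sphHatDist (sphDist_none_triangle a) (some x) (some y)

theorem one_div_sub_one_lt_dist_of_sphHatDist_lt {r : ℝ}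
    (h : sphHatDist a (some x) (some y) < r) : 1 / (sphD a x + r) - 1 < dist y a := by
  have hlt : sphD a y < sphD a x + r := by linarith [sphD_le_add_sphHatDist a x y]
  calc 1 / (sphD a x + r) - 1 < 1 / sphD a y - 1 := by
        gcongr
        exact sphD_pos a y
    _ = dist y a := by rw [sphD, one_div_one_div, add_sub_cancel_left]

theorem sphDist_lt_of_mem_ball {c : ℝ} (hc : c < 1) (hy : y ∈ ball x (c / sphD a x)) :
    sphDist a (some x) (some y) < c / (1 - c) * sphD a x := by
  have hx : 0 < 1 + dist x a := by positivity
  have hdist : dist x y < c * (1 + dist x a) := by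
    rwa [mem_ball', sphD, div_div_eq_mul_div, div_one] at hy
  have hcomparable : (1 - c) * (1 + dist x a) ≤ 1 + dist y a := by
    linarith [dist_triangle x y a]
  calc dist x y / ((1 + dist x a) * (1 + dist y a))
      = dist x y / (1 + dist y a) * sphD a x := by rw [sphD]; field_simp
    _ < c * (1 + dist x a) / ((1 - c) * (1 + dist x a)) * sphD a x :=
        mul_lt_mul_of_pos_right
          (div_lt_div₀ hdist hcomparable (dist_nonneg.trans hdist.le)
            (mul_pos (sub_pos.mpr hc) hx))
          (sphD_pos a x)
    _ = c / (1 - c) * sphD a x := by rw [mul_div_mul_right _ _ hx.ne']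

end Sphericalization

theorem statement8_general [MetricSpace X] (a x : X) (r : ℝ) (h : sphD a x / 3 ≤ r) :
    Option.some '' Metric.ball x (1 / (4 * sphD a x)) ⊆
      {y : Option X | sphDist a (some x) y < r} ∧
    {y : Option X | sphDist a (some x) y < r} ⊆
      {y : Option X | sphHatDist a (some x) y < r} ∧
    {y : Option X | sphHatDist a (some x) y < r} ⊆
      Set.univ \ (Option.some '' Metric.closedBall a (1 / (4 * r) - 1)) := by
  refine ⟨?_, fun y hy => (sphHatDist_le_sphDist a _ y).trans_lt hy, ?_⟩
  · rintro _ ⟨y, hy, rfl⟩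
    rw [← div_div] at hy
    calc sphDist a (some x) (some y) < 1 / 4 / (1 - 1 / 4) * sphD a x :=
          sphDist_lt_of_mem_ball (by norm_num) hy
      _ = sphD a x / 3 := by ring
      _ ≤ r := h
  · rintro _ hy
    refine ⟨mem_univ _, ?_⟩
    rintro ⟨y, hya, rfl⟩
    have hradius : 1 / (4 * r) ≤ 1 / (sphD a x + r) :=
      one_div_le_one_div_of_le (by linarith [sphD_pos a x]) (by linarith)
    linarith [one_div_sub_one_lt_dist_of_sphHatDist_lt hy, mem_closedBall.mp hya]

/-- For `x ∈ X` and `d̂(x)/3 ≤ r ≤ 1` one has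
`B(x, 1/(4 d̂(x))) ⊂ B_a(x,r) ⊂ B̂(x,r) ⊂ X̂ \ B̄(a, 1/(4r) − 1)`,
where `B̄(a,ρ) = {y ∈ X : d(y,a) ≤ ρ}` (empty when `ρ < 0`). -/
theorem statement8 [MetricSpace X]
    (hX : ¬ Bornology.IsBounded (Set.univ : Set X)) (a : X)
    (x : X) (r : ℝ) (h1 : sphD a x / 3 ≤ r) (h2 : r ≤ 1) :
    Option.some '' Metric.ball x (1 / (4 * sphD a x)) ⊆
      {y : Option X | sphDist a (some x) y < r} ∧
    {y : Option X | sphDist a (some x) y < r} ⊆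
      {y : Option X | sphHatDist a (some x) y < r} ∧
    {y : Option X | sphHatDist a (some x) y < r} ⊆
      Set.univ \ (Option.some '' Metric.closedBall a (1 / (4 * r) - 1)) := by
  exact statement8_general a x r h1
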